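/- arXiv:1909.06648 — 8 statements merged into one kernel-verified Lean document; each statement's English description precedes it below -/
import Mathlib

section
/- Let (a,b) ∈ [0,1]² and let c satisfy 0 ≤ c ≤ min{a,b,1−a,1−b}. Then the function C̲^{(a,b)}_c is a copula, i.e. it satisfies C̲^{(a,b)}_c(u,0) = C̲^{(a,b)}_c(0,v) = 0, C̲^{(a,b)}_c(u,1) = u and C̲^{(a,b)}_c(1,v) = v for all u,v ∈ [0,1], and it is 2-increasing. -/
open Set MeasureTheory intervalIntegral

/-- A bivariate copula: boundary conditions plus the 2-increasing property. -/
def IsCopula (C : ℝ → ℝ → ℝ) : Prop :=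
  (∀ u ∈ Set.Icc (0:ℝ) 1, C u 0 = 0 ∧ C 0 u = 0 ∧ C u 1 = u ∧ C 1 u = u) ∧
  ∀ u₁ u₂ v₁ v₂ : ℝ, 0 ≤ u₁ → u₁ ≤ u₂ → u₂ ≤ 1 → 0 ≤ v₁ → v₁ ≤ v₂ → v₂ ≤ 1 →
    0 ≤ C u₂ v₂ - C u₂ v₁ - C u₁ v₂ + C u₁ v₁

/-- The lower bound function C̲^{(a,b)}_c. -/
noncomputable def lowerC (a b c : ℝ) : ℝ → ℝ → ℝ := fun u v =>
  max (max (u + v - 1) 0)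
    (min (min (max (a + b - 1) 0 + c) (u - a + (max (a + b - 1) 0 + c)))
      (min (v - b + (max (a + b - 1) 0 + c)) (u + v - a - b + (max (a + b - 1) 0 + c))))

/-- The upper bound function C̄^{(a,b)}_c. -/
noncomputable def upperC (a b c : ℝ) : ℝ → ℝ → ℝ := fun u v =>
  min (min u v)
    (max (max (min a b - c) (u - b + (min a b - c)))
      (max (v - a + (min a b - c)) (u + v - a - b + (min a b - c))))

/-- Spearman's rho of a copula. -/
noncomputable def spearmanRho (C : ℝ → ℝ → ℝ) : ℝ :=
  12 * (∫ u in (0:ℝ)..1, ∫ v in (0:ℝ)..1, C u v) - 3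

/-- Spearman's footrule of a copula. -/
noncomputable def spearmanFootrule (C : ℝ → ℝ → ℝ) : ℝ :=
  6 * (∫ u in (0:ℝ)..1, C u u) - 2

/-- Gini's gamma of a copula. -/
noncomputable def giniGamma (C : ℝ → ℝ → ℝ) : ℝ :=
  4 * (∫ u in (0:ℝ)..1, (C u u + C u (1 - u))) - 2

/-- Blomqvist's beta of a copula. -/
noncomputable def blomqvistBeta (C : ℝ → ℝ → ℝ) : ℝ :=
  4 * C (1/2) (1/2) - 1

/-- The volume of a rectangle under the hinge function `max p (x + y)` is nonnegative. -/
theorem hinge_volume_nonneg (p : ℝ) {x₁ x₂ y₁ y₂ : ℝ} (hx : x₁ ≤ x₂) (hy : y₁ ≤ y₂) :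
    0 ≤ max p (x₂ + y₂) - max p (x₂ + y₁) - max p (x₁ + y₂) + max p (x₁ + y₁) := by
  rcases le_total p (x₂ + y₁) with h | h <;> rcases le_total p (x₁ + y₂) with h' | h' <;>
    simp only [max_eq_left, max_eq_right, h, h'] <;>
    linarith [le_max_left p (x₁ + y₁), le_max_right p (x₁ + y₁), le_max_left p (x₂ + y₂),
      le_max_right p (x₂ + y₂)]

/-- A common form of the lower bound function: a maximum of `max (u + v - 1) 0` and
`d + min (u - a) 0 + min (v - b) 0`. -/
theorem lowerC_eq (a b c u v : ℝ) :
    lowerC a b c u v = max (max (u + v - 1) 0)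
      (max (a + b - 1) 0 + c + min (u - a) 0 + min (v - b) 0) := by
  unfold lowerC
  generalize max (a + b - 1) 0 + c = d
  congr 1
  rcases le_total (u - a) 0 with h | h <;> rcases le_total (v - b) 0 with h' | h' <;>
    simp only [min_eq_left, min_eq_right, h, h'] <;> grind

/-- A function of two variables whose rectangle volumes are nonnegative on each of the four
quadrants at `(a, b)` has nonnegative rectangle volumes everywhere. -/
theorem volume_nonneg_of_quadrants {C : ℝ → ℝ → ℝ} {a b : ℝ}
    (h : ∀ S ∈ ({Iic a, Ici a} : Set (Set ℝ)), ∀ T ∈ ({Iic b, Ici b} : Set (Set ℝ)),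
      ∀ u₁ ∈ S, ∀ u₂ ∈ S, ∀ v₁ ∈ T, ∀ v₂ ∈ T, u₁ ≤ u₂ → v₁ ≤ v₂ →
        0 ≤ C u₂ v₂ - C u₂ v₁ - C u₁ v₂ + C u₁ v₁)
    {u₁ u₂ v₁ v₂ : ℝ} (hu : u₁ ≤ u₂) (hv : v₁ ≤ v₂) :
    0 ≤ C u₂ v₂ - C u₂ v₁ - C u₁ v₂ + C u₁ v₁ := by
  have strip : ∀ S ∈ ({Iic a, Ici a} : Set (Set ℝ)), ∀ u₁ ∈ S, ∀ u₂ ∈ S, u₁ ≤ u₂ →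
      Monotone fun v => C u₂ v - C u₁ v := by
    intro S hS u₁ h₁ u₂ h₂ hu
    refine MonotoneOn.Iic_union_Ici (a := b) (fun v₁ m₁ v₂ m₂ hv => ?_)
      (fun v₁ m₁ v₂ m₂ hv => ?_)
    · linarith [h S hS (Iic b) (by simp) u₁ h₁ u₂ h₂ v₁ m₁ v₂ m₂ hu hv]
    · linarith [h S hS (Ici b) (by simp) u₁ h₁ u₂ h₂ v₁ m₁ v₂ m₂ hu hv]
  have mono : Monotone fun u => C u v₂ - C u v₁ := by
    refine MonotoneOn.Iic_union_Ici (a := a) (fun u₁ m₁ u₂ m₂ hu => ?_)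
      (fun u₁ m₁ u₂ m₂ hu => ?_)
    · have := strip (Iic a) (by simp) u₁ m₁ u₂ m₂ hu hv
      dsimp only at this ⊢
      linarith
    · have := strip (Ici a) (by simp) u₁ m₁ u₂ m₂ hu hv
      dsimp only at this ⊢
      linarith
  have := mono hu
  dsimp only at this
  linarith

/-- The lower bound function has nonnegative rectangle volumes on the whole plane. -/
theorem lowerC_volume_nonneg {a b c : ℝ} (hc0 : 0 ≤ c) {u₁ u₂ v₁ v₂ : ℝ}
    (hu : u₁ ≤ u₂) (hv : v₁ ≤ v₂) :
    0 ≤ lowerC a b c u₂ v₂ - lowerC a b c u₂ v₁ - lowerC a b c u₁ v₂ + lowerC a b c u₁ v₁ := by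
  have hd : 0 ≤ max (a + b - 1) 0 + c := add_nonneg (le_max_right _ _) hc0
  refine volume_nonneg_of_quadrants (a := a) (b := b) ?_ hu hv
  simp only [lowerC_eq]
  generalize max (a + b - 1) 0 + c = d at hd
  rintro S (rfl | rfl) T (rfl | rfl) u₁ m₁ u₂ m₂ v₁ n₁ v₂ n₂ hu hv <;>
    simp only [mem_Iic, mem_Ici] at m₁ m₂ n₁ n₂
  · have key : ∀ u ≤ a, ∀ v ≤ b, max (max (u + v - 1) 0) (d + min (u - a) 0 + min (v - b) 0) =
        max 0 (u + (v + max (-1) (d - a - b))) := by grind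
    rw [key u₁ m₁ v₁ n₁, key u₁ m₁ v₂ n₂, key u₂ m₂ v₁ n₁, key u₂ m₂ v₂ n₂]
    exact hinge_volume_nonneg 0 hu (by gcongr)
  · have key : ∀ u ≤ a, ∀ v ≥ b, max (max (u + v - 1) 0) (d + min (u - a) 0 + min (v - b) 0) =
        max 0 (u + max (v - 1) (d - a)) := by grind
    rw [key u₁ m₁ v₁ n₁, key u₁ m₁ v₂ n₂, key u₂ m₂ v₁ n₁, key u₂ m₂ v₂ n₂]
    exact hinge_volume_nonneg 0 hu (by gcongr)
  · have key : ∀ u ≥ a, ∀ v ≤ b, max (max (u + v - 1) 0) (d + min (u - a) 0 + min (v - b) 0) =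
        max 0 (max (u - 1) (d - b) + v) := by grind
    rw [key u₁ m₁ v₁ n₁, key u₁ m₁ v₂ n₂, key u₂ m₂ v₁ n₁, key u₂ m₂ v₂ n₂]
    exact hinge_volume_nonneg 0 (by gcongr) hv
  · have key : ∀ u ≥ a, ∀ v ≥ b, max (max (u + v - 1) 0) (d + min (u - a) 0 + min (v - b) 0) =
        max d (u + (v - 1)) := by grind
    rw [key u₁ m₁ v₁ n₁, key u₁ m₁ v₂ n₂, key u₂ m₂ v₁ n₁, key u₂ m₂ v₂ n₂]
    exact hinge_volume_nonneg d hu (by gcongr)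

theorem lowerC_isCopula (a b c : ℝ) (ha : a ∈ Set.Icc (0:ℝ) 1) (hb : b ∈ Set.Icc (0:ℝ) 1)
    (hc0 : 0 ≤ c) (hc : c ≤ min (min a b) (min (1 - a) (1 - b))) :
    IsCopula (lowerC a b c) := by
  obtain ⟨ha0, ha1⟩ := ha
  obtain ⟨hb0, hb1⟩ := hb
  simp only [le_min_iff] at hc
  obtain ⟨⟨hca, hcb⟩, hca', hcb'⟩ := hc
  refine ⟨fun u ⟨hu0, hu1⟩ => ?_, fun u₁ u₂ v₁ v₂ _ hu _ _ hv _ => lowerC_volume_nonneg hc0 hu hv⟩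
  have hda : max (a + b - 1) 0 + c ≤ a := by grind
  have hdb : max (a + b - 1) 0 + c ≤ b := by grind
  simp only [lowerC_eq]
  generalize max (a + b - 1) 0 + c = d at hda hdb
  refine ⟨?_, ?_, ?_, ?_⟩ <;> grind
end

section
/- Let (a,b) ∈ [0,1]² and let c satisfy 0 ≤ c ≤ min{a,b,1−a,1−b}. Then the function C̄^{(a,b)}_c is a copula, i.e. it satisfies C̄^{(a,b)}_c(u,0) = C̄^{(a,b)}_c(0,v) = 0, C̄^{(a,b)}_c(u,1) = u and C̄^{(a,b)}_c(1,v) = v for all u,v ∈ [0,1], and it is 2-increasing. -/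
open Set MeasureTheory intervalIntegral

/-- The function `(x, y) ↦ min x y` is 2-increasing. -/
theorem min_rectangle_nonneg {x₁ x₂ y₁ y₂ : ℝ} (hx : x₁ ≤ x₂) (hy : y₁ ≤ y₂) :
    0 ≤ min x₂ y₂ - min x₂ y₁ - min x₁ y₂ + min x₁ y₁ := by
  grind

/-- The part of `[s, t]` to the left of `x`, measured by its length, is monotone in `x`. -/
theorem monotone_min_sub_min {s t : ℝ} (hst : s ≤ t) :
    Monotone fun x : ℝ => min x t - min x s := by
  intro x y hxy
  grind

/-- `upperC a b c` is a shuffle of `min`: with `d = min a b - c`, it maps the intervals cut out by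
`d, b, a + b - d` on the first axis to those cut out by `d, a, a + b - d` on the second axis,
exchanging the two middle ones. -/
theorem upperC_eq_sum_min {a b c d : ℝ} (hd : d = min a b - c) (hda : d ≤ a) (hdb : d ≤ b)
    (u v : ℝ) :
    upperC a b c u v =
      min (min u d) (min v d)
        + min (min u b - min u d) (min v (a + b - d) - min v a)
        + min (min u (a + b - d) - min u b) (min v a - min v d)
        + min (u - min u (a + b - d)) (v - min v (a + b - d)) := by
  have hmax : max (max d (u - b + d)) (max (v - a + d) (u + v - a - b + d))
      = d + max 0 (u - b) + max 0 (v - a) := by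
    grind
  unfold upperC
  rw [← hd, hmax]
  clear hmax hd
  rcases le_total u b with hub | hub
  · rcases le_total v a with hva | hva
    · rw [max_eq_left (by linarith), max_eq_left (by linarith), min_eq_left hub,
        min_eq_left hva, min_eq_left (by linarith : u ≤ a + b - d),
        min_eq_left (by linarith : v ≤ a + b - d)]
      grind
    · rw [max_eq_left (by linarith), max_eq_right (by linarith), min_eq_left hub,
        min_eq_right hva, min_eq_left (by linarith : u ≤ a + b - d)]
      grind
  · rcases le_total v a with hva | hva
    · rw [max_eq_right (by linarith), max_eq_left (by linarith), min_eq_right hub,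
        min_eq_left hva, min_eq_left (by linarith : v ≤ a + b - d)]
      grind
    · rw [max_eq_right (by linarith), max_eq_right (by linarith), min_eq_right hub,
        min_eq_right hva, min_eq_right (by linarith : d ≤ u), min_eq_right (by linarith : d ≤ v)]
      grind

theorem upperC_isCopula (a b c : ℝ) (ha : a ∈ Set.Icc (0:ℝ) 1) (hb : b ∈ Set.Icc (0:ℝ) 1)
    (hc0 : 0 ≤ c) (hc : c ≤ min (min a b) (min (1 - a) (1 - b))) :
    IsCopula (upperC a b c) := by
  obtain ⟨hcab, hcab'⟩ := le_min_iff.1 hc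
  obtain ⟨hca, hcb⟩ := le_min_iff.1 hcab'
  obtain ⟨d, hd⟩ : ∃ d, d = min a b - c := ⟨_, rfl⟩
  have hd0 : 0 ≤ d := by linarith
  have hda : d ≤ a := by linarith [min_le_left a b]
  have hdb : d ≤ b := by linarith [min_le_right a b]
  have hM : a + b - d ≤ 1 := by
    rcases min_choice a b with h | h <;> rw [h] at hd <;> linarith
  refine ⟨fun u hu => ?_, fun u₁ u₂ v₁ v₂ _ hu _ _ hv _ => ?_⟩
  · obtain ⟨hu0, hu1⟩ := hu
    have ha0 := ha.1
    have hb0 := hb.1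
    unfold upperC
    rw [← hd]
    clear hc hcab hcab' hd
    refine ⟨?_, ?_, ?_, ?_⟩ <;> grind
  · have last {t x y : ℝ} (hxy : x ≤ y) : x - min x t ≤ y - min y t := by grind
    simp only [upperC_eq_sum_min hd hda hdb]
    linarith [min_rectangle_nonneg (min_le_min_right d hu) (min_le_min_right d hv),
      min_rectangle_nonneg (monotone_min_sub_min hdb hu)
        (monotone_min_sub_min (by linarith : a ≤ a + b - d) hv),
      min_rectangle_nonneg (monotone_min_sub_min (by linarith : b ≤ a + b - d) hu)
        (monotone_min_sub_min hda hv),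
      min_rectangle_nonneg (last (t := a + b - d) hu) (last (t := a + b - d) hv)]
end

section
/- Let (a,b) ∈ [0,1]² and let c satisfy 0 ≤ c ≤ min{a,b,1−a,1−b}, and set d₁ = max{a+b−1,0} + c. Then 4∫₀¹ C̲^{(a,b)}_c(u,1−u) du − 1 = 4d₁(1−a−b+d₁) − 1. -/
open Set MeasureTheory intervalIntegral

/-- The integral over `[0, 1]` of a hinge function with its kink at `t`. -/
theorem integral_max_sub_zero (t : ℝ) (ht : t ∈ Set.Icc (0:ℝ) 1) :
    ∫ u in (0:ℝ)..1, max (u - t) 0 = (1 - t) ^ 2 / 2 := by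
  have hcont : Continuous fun u : ℝ => max (u - t) 0 := by fun_prop
  rw [← integral_add_adjacent_intervals (hcont.intervalIntegrable 0 t)
    (hcont.intervalIntegrable t 1)]
  have hleft : ∫ u in (0:ℝ)..t, max (u - t) 0 = ∫ _u in (0:ℝ)..t, (0:ℝ) := by
    refine integral_congr fun u hu => ?_
    rw [uIcc_of_le ht.1] at hu
    exact max_eq_right (by linarith [hu.2])
  have hright : ∫ u in t..1, max (u - t) 0 = ∫ u in t..1, (u - t) := by
    refine integral_congr fun u hu => ?_
    rw [uIcc_of_le ht.2] at hu
    exact max_eq_left (by linarith [hu.1])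
  rw [hleft, hright, intervalIntegral.integral_sub (by simp) (by simp)]
  simp only [intervalIntegral.integral_zero, integral_id, intervalIntegral.integral_const,
    smul_eq_mul]
  ring

/-- Along the antidiagonal the lower bound is a trapezoid, a combination of four hinges. -/
theorem lowerC_antidiagonal (a b c d : ℝ) (hd : d = max (a + b - 1) 0 + c)
    (hd0 : 0 ≤ d) (hde : 0 ≤ 1 - a - b + d) (u : ℝ) :
    lowerC a b c u (1 - u) =
      max (u - (a - d)) 0 - max (u - a) 0 - max (u - (1 - b)) 0 + max (u - (1 - b + d)) 0 := by
  simp only [lowerC, ← hd]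
  clear hd
  grind

theorem Q_W_lowerC (a b c d₁ : ℝ) (ha : a ∈ Set.Icc (0:ℝ) 1) (hb : b ∈ Set.Icc (0:ℝ) 1)
    (hc0 : 0 ≤ c) (hc : c ≤ min (min a b) (min (1 - a) (1 - b)))
    (hd : d₁ = max (a + b - 1) 0 + c) :
    4 * (∫ u in (0:ℝ)..1, lowerC a b c u (1 - u)) - 1 = 4 * d₁ * (1 - a - b + d₁) - 1 := by
  obtain ⟨ha0, ha1⟩ := ha
  obtain ⟨hb0, hb1⟩ := hb
  simp only [le_min_iff] at hc
  obtain ⟨⟨hca, hcb⟩, hca', hcb'⟩ := hc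
  have hd0 : 0 ≤ d₁ := by linarith [le_max_right (a + b - 1) 0]
  have hde : 0 ≤ 1 - a - b + d₁ := by linarith [le_max_left (a + b - 1) 0]
  have hda : d₁ ≤ a := by
    have : max (a + b - 1) 0 ≤ a - c := max_le (by linarith) (by linarith)
    linarith
  have hdb : d₁ ≤ b := by
    have : max (a + b - 1) 0 ≤ b - c := max_le (by linarith) (by linarith)
    linarith
  have hinge_int (t : ℝ) : IntervalIntegrable (fun u : ℝ => max (u - t) 0) volume 0 1 :=
    Continuous.intervalIntegrable (by fun_prop) 0 1
  simp only [lowerC_antidiagonal a b c d₁ hd hd0 hde]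
  rw [intervalIntegral.integral_add (((hinge_int _).sub (hinge_int _)).sub (hinge_int _)) (hinge_int _),
    intervalIntegral.integral_sub ((hinge_int _).sub (hinge_int _)) (hinge_int _),
    intervalIntegral.integral_sub (hinge_int _) (hinge_int _),
    integral_max_sub_zero _ ⟨by linarith, by linarith⟩,
    integral_max_sub_zero _ ⟨ha0, ha1⟩,
    integral_max_sub_zero _ ⟨by linarith, by linarith⟩,
    integral_max_sub_zero _ ⟨by linarith, by linarith⟩]
  ring
end

section
/- Let (a,b) ∈ [0,1]² and let c satisfy 0 ≤ c ≤ min{a,b,1−a,1−b}, and set d₁ = max{a+b−1,0} + c and Q = 4∫₀¹ C̲^{(a,b)}_c(u,u) du − 1. Then: Q = 0 if b ≥ d₁ + 1/2; Q = (2d₁+1−2b)² if (1+d₁)/2 ≤ b ≤ d₁ + 1/2 and a ≤ b−d₁; Q = (a+b−1−d₁)(3b−3d₁−a−1) if (1+d₁)/2 ≤ b ≤ d₁ + 1/2 and a ≥ b−d₁; Q = d₁(2+3d₁−4b) if b ≤ (1+d₁)/2 and a ≤ b−d₁; Q = 2d₁(1+d₁−a−b)−(a−b)² if d₁ ≥ 2a−1,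 d₁ ≥ 2b−1, d₁ ≥ a−b and d₁ ≥ b−a; Q = d₁(2+3d₁−4a) if a ≤ (1+d₁)/2 and b ≤ a−d₁; Q = (a+b−1−d₁)(3a−3d₁−b−1) if (1+d₁)/2 ≤ a ≤ d₁ + 1/2 and b ≥ a−d₁; Q = (2d₁+1−2a)² if (1+d₁)/2 ≤ a ≤ d₁ + 1/2 and b ≤ a−d₁; Q = 0 if a ≥ d₁ + 1/2. -/
open Set MeasureTheory intervalIntegral

theorem lowerC_diag_swap (a b c u : ℝ) : lowerC a b c u u = lowerC b a c u u := by
  have h : u + u - a - b = u + u - b - a := by ring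
  simp only [lowerC, add_comm a b, h]
  congr 1
  simp only [min_assoc, min_left_comm]

theorem continuous_lowerC_diag (a b c : ℝ) : Continuous fun u => lowerC a b c u u := by
  unfold lowerC
  fun_prop

theorem integral_eq_of_eq_affine {F : ℝ → ℝ} {x y m k : ℝ} (hxy : x ≤ y)
    (h : ∀ u, x < u → u < y → F u = m * u + k) :
    ∫ u in x..y, F u = m * (y ^ 2 - x ^ 2) / 2 + k * (y - x) := by
  have hcongr : ∫ u in x..y, F u = ∫ u in x..y, (m * u + k) :=
    integral_congr_Ioo_of_le hxy fun u hu => h u hu.1 hu.2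
  rw [hcongr, intervalIntegral.integral_add (Continuous.intervalIntegrable (by fun_prop) _ _)
    (Continuous.intervalIntegrable (by fun_prop) _ _), intervalIntegral.integral_const_mul,
    integral_id, intervalIntegral.integral_const, smul_eq_mul]
  ring

/-- The integral over `[0, 1]` of a continuous function that is affine between the breakpoints
`p ≤ s ≤ t ≤ q`, with the slopes `0, 2, 1, 0, 2` taken by the diagonal section of `lowerC`. -/
theorem integral_of_diag_pieces {F : ℝ → ℝ} (hF : Continuous F) {p s t q k l d : ℝ}
    (hp : 0 ≤ p) (hps : p ≤ s) (hst : s ≤ t) (htq : t ≤ q) (hq : q ≤ 1)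
    (h₀ : ∀ u, 0 < u → u < p → F u = 0 * u + 0)
    (h₁ : ∀ u, p < u → u < s → F u = 2 * u + k)
    (h₂ : ∀ u, s < u → u < t → F u = 1 * u + l)
    (h₃ : ∀ u, t < u → u < q → F u = 0 * u + d)
    (h₄ : ∀ u, q < u → u < 1 → F u = 2 * u + -1) :
    ∫ u in (0:ℝ)..1, F u = (s ^ 2 - p ^ 2) + k * (s - p) + (t ^ 2 - s ^ 2) / 2 + l * (t - s)
      + d * (q - t) + (q - q ^ 2) := by
  have hI (x y : ℝ) : IntervalIntegrable F volume x y := hF.intervalIntegrable x y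
  rw [← integral_add_adjacent_intervals (hI 0 p) (hI p 1),
    ← integral_add_adjacent_intervals (hI p s) (hI s 1),
    ← integral_add_adjacent_intervals (hI s t) (hI t 1),
    ← integral_add_adjacent_intervals (hI t q) (hI q 1),
    integral_eq_of_eq_affine hp h₀, integral_eq_of_eq_affine hps h₁,
    integral_eq_of_eq_affine hst h₂, integral_eq_of_eq_affine htq h₃,
    integral_eq_of_eq_affine hq h₄]
  ring

theorem lowerC_diag_of_le {a b c d : ℝ} (hab : a ≤ b) (hd : d = max (a + b - 1) 0 + c) (u : ℝ) :
    lowerC a b c u u = max (max (2 * u - 1) 0) (min d (min (u - b + d) (2 * u - a - b + d))) := by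
  simp only [lowerC, ← hd]
  grind

/-- The bounds on `d₁` that the constraints on `c` provide. -/
theorem lowerC_level_bounds {a b c d : ℝ} (hc0 : 0 ≤ c)
    (hc : c ≤ min (min a b) (min (1 - a) (1 - b))) (hd : d = max (a + b - 1) 0 + c) :
    0 ≤ d ∧ d ≤ a ∧ d ≤ b ∧ a + b - 1 ≤ d := by
  simp only [le_min_iff] at hc
  grind

theorem Q_M_lowerC_eq_zero {a b c d : ℝ} (hab : a ≤ b)
    (hd : d = max (a + b - 1) 0 + c) (hd0 : 0 ≤ d) (hdab : a + b - 1 ≤ d)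
    (h : d + 1 / 2 ≤ b) :
    4 * (∫ u in (0:ℝ)..1, lowerC a b c u u) - 1 = 0 := by
  rw [integral_of_diag_pieces (continuous_lowerC_diag a b c)
    (p := 1 / 2) (s := 1 / 2) (t := 1 / 2) (q := 1 / 2)
    (k := d - a - b) (l := d - b) (d := d)
    (by linarith) (by linarith) (by linarith) (by linarith) (by linarith)]
  · ring
  all_goals
    intro u hu hu'
    rw [lowerC_diag_of_le hab hd]
    grind

theorem Q_M_lowerC_eq_sq {a b c d : ℝ} (hab : a ≤ b)
    (hd : d = max (a + b - 1) 0 + c) (hd0 : 0 ≤ d) (hda : d ≤ a) (hdab : a + b - 1 ≤ d)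
    (h₁ : (1 + d) / 2 ≤ b) (h₂ : b ≤ d + 1 / 2) (h₃ : a ≤ b - d) :
    4 * (∫ u in (0:ℝ)..1, lowerC a b c u u) - 1 = (2 * d + 1 - 2 * b) ^ 2 := by
  rw [integral_of_diag_pieces (continuous_lowerC_diag a b c)
    (p := b - d) (s := b - d) (t := 1 - b + d) (q := 1 - b + d)
    (k := d - a - b) (l := d - b) (d := d)
    (by linarith) (by linarith) (by linarith) (by linarith) (by linarith)]
  · ring
  all_goals
    intro u hu hu'
    rw [lowerC_diag_of_le hab hd]
    grind

theorem Q_M_lowerC_eq_mul {a b c d : ℝ} (hab : a ≤ b)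
    (hd : d = max (a + b - 1) 0 + c) (hd0 : 0 ≤ d) (hda : d ≤ a) (hdab : a + b - 1 ≤ d)
    (h₁ : (1 + d) / 2 ≤ b) (h₂ : b - d ≤ a) :
    4 * (∫ u in (0:ℝ)..1, lowerC a b c u u) - 1 = (a + b - 1 - d) * (3 * b - 3 * d - a - 1) := by
  rw [integral_of_diag_pieces (continuous_lowerC_diag a b c)
    (p := (a + b - d) / 2) (s := a) (t := 1 - b + d) (q := 1 - b + d)
    (k := d - a - b) (l := d - b) (d := d)
    (by linarith) (by linarith) (by linarith) (by linarith) (by linarith)]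
  · ring
  all_goals
    intro u hu hu'
    rw [lowerC_diag_of_le hab hd]
    grind

theorem Q_M_lowerC_eq_level_mul {a b c d : ℝ} (hab : a ≤ b) (hb : b ≤ 1)
    (hd : d = max (a + b - 1) 0 + c) (hd0 : 0 ≤ d) (hda : d ≤ a)
    (h₁ : b ≤ (1 + d) / 2) (h₂ : a ≤ b - d) :
    4 * (∫ u in (0:ℝ)..1, lowerC a b c u u) - 1 = d * (2 + 3 * d - 4 * b) := by
  rw [integral_of_diag_pieces (continuous_lowerC_diag a b c)
    (p := b - d) (s := b - d) (t := b) (q := (1 + d) / 2)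
    (k := d - a - b) (l := d - b) (d := d)
    (by linarith) (by linarith) (by linarith) (by linarith) (by linarith)]
  · ring
  all_goals
    intro u hu hu'
    rw [lowerC_diag_of_le hab hd]
    grind

theorem Q_M_lowerC_eq_sub_sq {a b c d : ℝ} (hab : a ≤ b) (hb : b ≤ 1)
    (hd : d = max (a + b - 1) 0 + c) (hd0 : 0 ≤ d) (hda : d ≤ a) (hdab : a + b - 1 ≤ d)
    (h₁ : b ≤ (1 + d) / 2) (h₂ : b - d ≤ a) :
    4 * (∫ u in (0:ℝ)..1, lowerC a b c u u) - 1 = 2 * d * (1 + d - a - b) - (a - b) ^ 2 := by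
  rw [integral_of_diag_pieces (continuous_lowerC_diag a b c)
    (p := (a + b - d) / 2) (s := a) (t := b) (q := (1 + d) / 2)
    (k := d - a - b) (l := d - b) (d := d)
    (by linarith) (by linarith) (by linarith) (by linarith) (by linarith)]
  · ring
  all_goals
    intro u hu hu'
    rw [lowerC_diag_of_le hab hd]
    grind

theorem Q_M_lowerC (a b c d₁ Q : ℝ) (ha : a ∈ Set.Icc (0:ℝ) 1) (hb : b ∈ Set.Icc (0:ℝ) 1)
    (hc0 : 0 ≤ c) (hc : c ≤ min (min a b) (min (1 - a) (1 - b)))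
    (hd : d₁ = max (a + b - 1) 0 + c)
    (hQ : Q = 4 * (∫ u in (0:ℝ)..1, lowerC a b c u u) - 1) :
    (b ≥ d₁ + 1/2 → Q = 0) ∧
    ((1 + d₁)/2 ≤ b → b ≤ d₁ + 1/2 → a ≤ b - d₁ → Q = (2*d₁ + 1 - 2*b)^2) ∧
    ((1 + d₁)/2 ≤ b → b ≤ d₁ + 1/2 → a ≥ b - d₁ →
      Q = (a + b - 1 - d₁) * (3*b - 3*d₁ - a - 1)) ∧
    (b ≤ (1 + d₁)/2 → a ≤ b - d₁ → Q = d₁ * (2 + 3*d₁ - 4*b)) ∧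
    (d₁ ≥ 2*a - 1 → d₁ ≥ 2*b - 1 → d₁ ≥ a - b → d₁ ≥ b - a →
      Q = 2*d₁*(1 + d₁ - a - b) - (a - b)^2) ∧
    (a ≤ (1 + d₁)/2 → b ≤ a - d₁ → Q = d₁ * (2 + 3*d₁ - 4*a)) ∧
    ((1 + d₁)/2 ≤ a → a ≤ d₁ + 1/2 → b ≥ a - d₁ →
      Q = (a + b - 1 - d₁) * (3*a - 3*d₁ - b - 1)) ∧
    ((1 + d₁)/2 ≤ a → a ≤ d₁ + 1/2 → b ≤ a - d₁ → Q = (2*d₁ + 1 - 2*a)^2) ∧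
    (a ≥ d₁ + 1/2 → Q = 0) := by
  obtain ⟨hd0, hda, hdb, hdab⟩ := lowerC_level_bounds hc0 hc hd
  have hd' : d₁ = max (b + a - 1) 0 + c := by rw [hd, add_comm a b]
  have hdba : b + a - 1 ≤ d₁ := by linarith
  have hQ' : Q = 4 * (∫ u in (0:ℝ)..1, lowerC b a c u u) - 1 := by
    simp only [hQ, lowerC_diag_swap a b c]
  refine ⟨fun h => ?_, fun h₁ h₂ h₃ => ?_, fun h₁ h₂ h₃ => ?_, fun h₁ h₂ => ?_,
    fun h₁ h₂ h₃ h₄ => ?_, fun h₁ h₂ => ?_, fun h₁ h₂ h₃ => ?_, fun h₁ h₂ h₃ => ?_, fun h => ?_⟩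
  · rw [hQ, Q_M_lowerC_eq_zero (by linarith) hd hd0 hdab h]
  · rw [hQ, Q_M_lowerC_eq_sq (by linarith) hd hd0 hda hdab h₁ h₂ h₃]
  · rw [hQ, Q_M_lowerC_eq_mul (by linarith) hd hd0 hda hdab h₁ h₃]
  · rw [hQ, Q_M_lowerC_eq_level_mul (by linarith) hb.2 hd hd0 hda h₁ h₂]
  · rcases le_total a b with hab | hab
    · rw [hQ, Q_M_lowerC_eq_sub_sq hab hb.2 hd hd0 hda hdab (by linarith) (by linarith)]
    · rw [hQ', Q_M_lowerC_eq_sub_sq hab ha.2 hd' hd0 hdb hdba (by linarith) (by linarith)]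
      ring
  · rw [hQ', Q_M_lowerC_eq_level_mul (by linarith) ha.2 hd' hd0 hdb h₁ h₂]
  · rw [hQ', Q_M_lowerC_eq_mul (by linarith) hd' hd0 hdb hdba h₁ h₃]
    ring
  · rw [hQ', Q_M_lowerC_eq_sq (by linarith) hd' hd0 hdb hdba h₁ h₂ h₃]
  · rw [hQ', Q_M_lowerC_eq_zero (by linarith) hd' hd0 hdba h]
end

section
/- Let (a,b) ∈ [0,1]² and let c satisfy 0 ≤ c ≤ min{a,b,1−a,1−b}, and set d₂ = min{a,b} − c and Q = 4∫₀¹ C̄^{(a,b)}_c(u,1−u) du − 1. Then: Q = 0 if a+b−1/2 ≤ d₂; Q = −(2a+2b−2d₂−1)² if max{2a+b−1, a+2b−1} ≤ d₂ ≤ a+b−1/2; Q = −(4a+3b−3d₂−2)(b−d₂) if a+2b−1 ≤ d₂ ≤ 2a+b−1; Q = −(3a+4b−3d₂−2)(a−d₂) if 2a+b−1 ≤ d₂ ≤ a+2b−1; Q = (a−1)²+(b−1)²+2d₂(a+b−d₂)−1 if d₂ ≤ min{1−a, 1−b, 2a+b−1, a+2b−1}; Q = (a−d₂)(a+3d₂−2)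 if 1−b ≤ d₂ ≤ 1−a; Q = (b−d₂)(b+3d₂−2) if 1−a ≤ d₂ ≤ 1−b; Q = −(1−2d₂)² if max{1−a, 1−b} ≤ d₂ ≤ 1/2; Q = 0 if 1/2 ≤ d₂. -/
open Set MeasureTheory intervalIntegral

/-- The integral of `u ↦ upperC a b c u (1 - u)` over `[0, 1/2]`, written in terms of
`d = min a b - c`. -/
noncomputable def halfIntegral (a b d : ℝ) : ℝ :=
  ∫ u in (0:ℝ)..(1/2), min u (d + max (u - b) 0 + max (1 - a - u) 0)

lemma upperC_antidiag_left {a b c u : ℝ} (hu : u ≤ 1/2) :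
    upperC a b c u (1 - u) =
      min u (min a b - c + max (u - b) 0 + max (1 - a - u) 0) := by
  have h : min u (1 - u) = u := min_eq_left (by linarith)
  unfold upperC
  rw [h]
  congr 1
  generalize min a b - c = d
  grind

lemma upperC_swap (a b c u v : ℝ) : upperC a b c u v = upperC b a c v u := by
  simp only [upperC, min_comm b a, min_comm v u]
  congr 1
  rw [max_max_max_comm]
  ring_nf

lemma continuous_upperC_antidiag (a b c : ℝ) :
    Continuous fun u => upperC a b c u (1 - u) := by
  unfold upperC
  fun_prop

lemma integral_upperC_antidiag_left (a b c : ℝ) :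
    ∫ u in (0:ℝ)..(1/2), upperC a b c u (1 - u) = halfIntegral a b (min a b - c) := by
  refine intervalIntegral.integral_congr fun u hu => ?_
  rw [uIcc_of_le (by norm_num)] at hu
  exact upperC_antidiag_left hu.2

lemma integral_upperC_antidiag (a b c : ℝ) :
    ∫ u in (0:ℝ)..1, upperC a b c u (1 - u) =
      halfIntegral a b (min a b - c) + halfIntegral b a (min a b - c) := by
  have hcont := continuous_upperC_antidiag a b c
  rw [← intervalIntegral.integral_add_adjacent_intervals
    (hcont.intervalIntegrable 0 (1/2)) (hcont.intervalIntegrable (1/2) 1),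
    integral_upperC_antidiag_left, min_comm a b, ← integral_upperC_antidiag_left b a c]
  congr 1
  have h := intervalIntegral.integral_comp_sub_left
    (a := 0) (b := 1/2) (fun u => upperC a b c u (1 - u)) 1
  norm_num at h
  norm_num
  rw [← h]
  simp only [upperC_swap a b]

lemma integral_posPart_sub {t : ℝ} (ht : 0 ≤ t) :
    ∫ u in (0:ℝ)..(1/2), max (u - t) 0 = max (1/2 - t) 0 ^ 2 / 2 := by
  have hcont : Continuous fun u : ℝ => max (u - t) 0 := by fun_prop
  have hzero : ∀ s, 0 ≤ s → s ≤ t → ∫ u in (0:ℝ)..s, max (u - t) 0 = 0 := by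
    intro s hs hst
    rw [intervalIntegral.integral_congr (g := fun _ => (0:ℝ))]
    · simp
    · intro u hu
      rw [uIcc_of_le hs] at hu
      exact max_eq_right (by linarith [hu.2])
  rcases le_total t (1/2) with h | h
  · rw [← intervalIntegral.integral_add_adjacent_intervals
      (hcont.intervalIntegrable 0 t) (hcont.intervalIntegrable t (1/2)), hzero t ht le_rfl,
      intervalIntegral.integral_congr (g := fun u => u - t)]
    · rw [max_eq_left (by linarith), intervalIntegral.integral_sub (by simp) (by simp)]
      simp only [integral_id, intervalIntegral.integral_const, smul_eq_mul]
      ring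
    · intro u hu
      rw [uIcc_of_le h] at hu
      exact max_eq_left (by linarith [hu.1])
  · rw [hzero _ (by norm_num) h, max_eq_right (by linarith)]
    norm_num

/-- Integrating a combination of ramps over `[0, 1/2]`. -/
lemma integral_id_sub_ramps {k p q r : ℝ} (l m : ℝ) (hp : 0 ≤ p) (hq : 0 ≤ q) (hr : 0 ≤ r) :
    ∫ u in (0:ℝ)..(1/2), (u - k * max (u - p) 0 + l * max (u - q) 0 + m * max (u - r) 0) =
      1/8 - k * (max (1/2 - p) 0 ^ 2 / 2) + l * (max (1/2 - q) 0 ^ 2 / 2) +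
        m * (max (1/2 - r) 0 ^ 2 / 2) := by
  have hint : ∀ k p : ℝ, IntervalIntegrable (fun u : ℝ => k * max (u - p) 0) volume 0 (1/2) :=
    fun k p => Continuous.intervalIntegrable (by fun_prop) _ _
  have hid : IntervalIntegrable (fun u : ℝ => u) volume 0 (1/2) :=
    continuous_id.intervalIntegrable _ _
  rw [intervalIntegral.integral_add ((hid.sub (hint _ _)).add (hint _ _)) (hint _ _),
    intervalIntegral.integral_add (hid.sub (hint _ _)) (hint _ _),
    intervalIntegral.integral_sub hid (hint _ _)]
  simp only [intervalIntegral.integral_const_mul, integral_posPart_sub hp,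
    integral_posPart_sub hq, integral_posPart_sub hr, integral_id]
  norm_num

/-- The graph of the second argument of the minimum meets the diagonal where it has slope `-1`. -/
lemma halfIntegral_of_le {a b d : ℝ} (ha : a ≤ 1) (hb : 0 ≤ b) (hd : 0 ≤ d)
    (h₁ : d ≤ 1 - a) (h₂ : d ≤ a + 2 * b - 1) :
    halfIntegral a b d = 1/8 - max (1/2 - (1 - a + d) / 2) 0 ^ 2 +
      max (1/2 - b) 0 ^ 2 / 2 + max (a - 1/2) 0 ^ 2 / 2 := by
  have h := integral_id_sub_ramps (k := 2) (p := (1 - a + d) / 2) (q := b) (r := 1 - a) 1 1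
    (by linarith) hb (by linarith)
  rw [show (1:ℝ)/2 - (1 - a) = a - 1/2 by ring] at h
  unfold halfIntegral
  rw [intervalIntegral.integral_congr (g := fun u => _) fun u _ => ?_, h]
  · ring
  · grind

/-- The graph of the second argument of the minimum meets the diagonal at `d`. -/
lemma halfIntegral_of_one_sub_le {a b d : ℝ} (hb : 0 ≤ b) (hd : 0 ≤ d) (hdb : d ≤ b)
    (h : 1 - a ≤ d) :
    halfIntegral a b d = 1/8 - max (1/2 - d) 0 ^ 2 / 2 + max (1/2 - b) 0 ^ 2 / 2 := by
  have hI := integral_id_sub_ramps (k := 1) (p := d) (q := b) (r := 0) 1 0 hd hb le_rfl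
  unfold halfIntegral
  rw [intervalIntegral.integral_congr (g := fun u => _) fun u _ => ?_, hI]
  · ring
  · grind

/-- The graph of the second argument of the minimum meets the diagonal at `1 - a - b + d`. -/
lemma halfIntegral_of_add_le {a b d : ℝ} (ha : a ≤ 1) (hdb : d ≤ b) (hd : a + b - 1 ≤ d)
    (h : a + 2 * b - 1 ≤ d) :
    halfIntegral a b d =
      1/8 - max (a + b - d - 1/2) 0 ^ 2 / 2 + max (a - 1/2) 0 ^ 2 / 2 := by
  have hI := integral_id_sub_ramps (k := 1) (p := 1 - a - b + d) (q := 1 - a) (r := 0) 1 0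
    (by linarith) (by linarith) le_rfl
  rw [show (1:ℝ)/2 - (1 - a) = a - 1/2 by ring,
    show (1:ℝ)/2 - (1 - a - b + d) = a + b - d - 1/2 by ring] at hI
  unfold halfIntegral
  rw [intervalIntegral.integral_congr (g := fun u => _) fun u _ => ?_, hI]
  · ring
  · grind

lemma sq_posPart_add_sq_posPart_sub (x y : ℝ) :
    max (x - y) 0 ^ 2 + max (y - x) 0 ^ 2 = (x - y) ^ 2 := by
  rcases le_total x y with h | h
  · rw [max_eq_right (by linarith), max_eq_left (by linarith)]
    ring
  · rw [max_eq_left (by linarith), max_eq_right (by linarith)]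
    ring

theorem Q_W_upperC (a b c d₂ Q : ℝ) (ha : a ∈ Set.Icc (0:ℝ) 1) (hb : b ∈ Set.Icc (0:ℝ) 1)
    (hc0 : 0 ≤ c) (hc : c ≤ min (min a b) (min (1 - a) (1 - b)))
    (hd : d₂ = min a b - c)
    (hQ : Q = 4 * (∫ u in (0:ℝ)..1, upperC a b c u (1 - u)) - 1) :
    (a + b - 1/2 ≤ d₂ → Q = 0) ∧
    (max (2*a + b - 1) (a + 2*b - 1) ≤ d₂ → d₂ ≤ a + b - 1/2 →
      Q = -(2*a + 2*b - 2*d₂ - 1)^2) ∧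
    (a + 2*b - 1 ≤ d₂ → d₂ ≤ 2*a + b - 1 → Q = -(4*a + 3*b - 3*d₂ - 2) * (b - d₂)) ∧
    (2*a + b - 1 ≤ d₂ → d₂ ≤ a + 2*b - 1 → Q = -(3*a + 4*b - 3*d₂ - 2) * (a - d₂)) ∧
    (d₂ ≤ min (min (1 - a) (1 - b)) (min (2*a + b - 1) (a + 2*b - 1)) →
      Q = (a - 1)^2 + (b - 1)^2 + 2*d₂*(a + b - d₂) - 1) ∧
    (1 - b ≤ d₂ → d₂ ≤ 1 - a → Q = (a - d₂) * (a + 3*d₂ - 2)) ∧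
    (1 - a ≤ d₂ → d₂ ≤ 1 - b → Q = (b - d₂) * (b + 3*d₂ - 2)) ∧
    (max (1 - a) (1 - b) ≤ d₂ → d₂ ≤ 1/2 → Q = -(1 - 2*d₂)^2) ∧
    (1/2 ≤ d₂ → Q = 0) := by
  obtain ⟨ha0, ha1⟩ := ha
  obtain ⟨hb0, hb1⟩ := hb
  simp only [le_min_iff] at hc
  obtain ⟨⟨hca, hcb⟩, hc1a, hc1b⟩ := hc
  have hd0 : 0 ≤ d₂ := by grind
  have hda : d₂ ≤ a := by grind
  have hdb : d₂ ≤ b := by grind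
  have hdab : a + b - 1 ≤ d₂ := by grind
  have hdba : b + a - 1 ≤ d₂ := by linarith
  rw [integral_upperC_antidiag, ← hd] at hQ
  clear hd hca hcb hc1a hc1b hc0
  subst hQ
  have sqa := sq_posPart_add_sq_posPart_sub a (1/2)
  have sqb := sq_posPart_add_sq_posPart_sub b (1/2)
  simp only [max_le_iff, le_min_iff]
  refine ⟨fun h => ?_, fun ⟨h₁, h₂⟩ h => ?_, fun h₁ h₂ => ?_, fun h₁ h₂ => ?_,
    fun ⟨⟨h₁, h₂⟩, h₃, h₄⟩ => ?_, fun h₁ h₂ => ?_, fun h₁ h₂ => ?_, fun ⟨h₁, h₂⟩ h => ?_,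
    fun h => ?_⟩
  · rw [halfIntegral_of_add_le ha1 hdb hdab (by linarith),
      halfIntegral_of_add_le hb1 hda hdba (by linarith),
      max_eq_right (by linarith), max_eq_right (by linarith), max_eq_right (by linarith),
      max_eq_right (by linarith)]
    ring
  · rw [halfIntegral_of_add_le ha1 hdb hdab (by linarith),
      halfIntegral_of_add_le hb1 hda hdba (by linarith),
      max_eq_left (by linarith), max_eq_right (by linarith), max_eq_left (by linarith),
      max_eq_right (by linarith)]
    ring
  · rw [halfIntegral_of_add_le ha1 hdb hdab (by linarith),
      halfIntegral_of_le hb1 ha0 hd0 (by linarith) (by linarith),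
      max_eq_left (a := a + b - d₂ - 1/2) (by linarith),
      max_eq_left (a := 1/2 - (1 - b + d₂) / 2) (by linarith),
      max_eq_right (a := b - 1/2) (by linarith)]
    linear_combination 2 * sqa
  · rw [halfIntegral_of_le ha1 hb0 hd0 (by linarith) (by linarith),
      halfIntegral_of_add_le hb1 hda hdba (by linarith),
      max_eq_left (a := b + a - d₂ - 1/2) (by linarith),
      max_eq_left (a := 1/2 - (1 - a + d₂) / 2) (by linarith),
      max_eq_right (a := a - 1/2) (by linarith)]
    linear_combination 2 * sqb
  · rw [halfIntegral_of_le ha1 hb0 hd0 (by linarith) (by linarith),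
      halfIntegral_of_le hb1 ha0 hd0 (by linarith) (by linarith),
      max_eq_left (a := 1/2 - (1 - a + d₂) / 2) (by linarith),
      max_eq_left (a := 1/2 - (1 - b + d₂) / 2) (by linarith)]
    linear_combination 2 * sqa + 2 * sqb
  · rw [halfIntegral_of_le ha1 hb0 hd0 (by linarith) (by linarith),
      halfIntegral_of_one_sub_le ha0 hd0 hda (by linarith),
      max_eq_left (a := 1/2 - (1 - a + d₂) / 2) (by linarith),
      max_eq_left (a := 1/2 - d₂) (by linarith),
      max_eq_right (a := 1/2 - b) (by linarith)]
    linear_combination 2 * sqa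
  · rw [halfIntegral_of_one_sub_le hb0 hd0 hdb (by linarith),
      halfIntegral_of_le hb1 ha0 hd0 (by linarith) (by linarith),
      max_eq_left (a := 1/2 - (1 - b + d₂) / 2) (by linarith),
      max_eq_left (a := 1/2 - d₂) (by linarith),
      max_eq_right (a := 1/2 - a) (by linarith)]
    linear_combination 2 * sqb
  · rw [halfIntegral_of_one_sub_le hb0 hd0 hdb (by linarith),
      halfIntegral_of_one_sub_le ha0 hd0 hda (by linarith),
      max_eq_left (a := 1/2 - d₂) (by linarith), max_eq_right (a := 1/2 - a) (by linarith),
      max_eq_right (a := 1/2 - b) (by linarith)]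
    ring
  · rw [halfIntegral_of_one_sub_le hb0 hd0 hdb (by linarith),
      halfIntegral_of_one_sub_le ha0 hd0 hda (by linarith),
      max_eq_right (a := 1/2 - d₂) (by linarith), max_eq_right (a := 1/2 - a) (by linarith),
      max_eq_right (a := 1/2 - b) (by linarith)]
    ring
end

section
/- Let (a,b) ∈ [0,1]² and let c satisfy 0 ≤ c ≤ min{a,b,1−a,1−b}, and set d₂ = min{a,b} − c. Then 12∫₀¹∫₀¹ C̄^{(a,b)}_c(u,v) du dv − 3 = 1 − 6(a+b−2d₂)(a−d₂)(b−d₂); equivalently, Spearman's rho of C̄^{(a,b)}_c equals 1 − 6(a+b−2d₂)(a−d₂)(b−d₂). -/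
open Set MeasureTheory intervalIntegral

/-- Splitting the integral of a continuous function over `[0, 1]` at three intermediate points. -/
theorem integral_zero_one_eq_of_eqOn {f g₁ g₂ g₃ g₄ : ℝ → ℝ} (hf : Continuous f) {x y z : ℝ}
    (hx : 0 ≤ x) (hxy : x ≤ y) (hyz : y ≤ z) (hz : z ≤ 1)
    (h₁ : EqOn f g₁ (Icc 0 x)) (h₂ : EqOn f g₂ (Icc x y))
    (h₃ : EqOn f g₃ (Icc y z)) (h₄ : EqOn f g₄ (Icc z 1)) :
    ∫ t in (0:ℝ)..1, f t = (∫ t in (0:ℝ)..x, g₁ t) + (∫ t in x..y, g₂ t) + (∫ t in y..z, g₃ t)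
      + ∫ t in z..1, g₄ t := by
  have hi : ∀ p q : ℝ, IntervalIntegrable f volume p q := hf.intervalIntegrable
  rw [← integral_add_adjacent_intervals (hi 0 z) (hi z 1),
    ← integral_add_adjacent_intervals (hi 0 y) (hi y z),
    ← integral_add_adjacent_intervals (hi 0 x) (hi x y)]
  rw [← uIcc_of_le hx] at h₁
  rw [← uIcc_of_le hxy] at h₂
  rw [← uIcc_of_le hyz] at h₃
  rw [← uIcc_of_le hz] at h₄
  rw [integral_congr h₁, integral_congr h₂, integral_congr h₃, integral_congr h₄]

/-- The integral of a quadratic polynomial over an interval. -/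
theorem integral_quadratic (k l m x y : ℝ) :
    ∫ t in x..y, (k + l * t + m * t ^ 2)
      = k * (y - x) + l * (y ^ 2 - x ^ 2) / 2 + m * (y ^ 3 - x ^ 3) / 3 := by
  have h : ∀ t ∈ uIcc x y,
      HasDerivAt (fun t : ℝ => k * t + l * t ^ 2 / 2 + m * t ^ 3 / 3)
        (k + l * t + m * t ^ 2) t := by
    intro t _
    refine ((((hasDerivAt_id' t).const_mul k).fun_add
      (((hasDerivAt_pow 2 t).const_mul l).div_const 2)).fun_add
      (((hasDerivAt_pow 3 t).const_mul m).div_const 3)).congr_deriv ?_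
    norm_num
    ring
  rw [integral_eq_sub_of_hasDerivAt h (Continuous.intervalIntegrable (by fun_prop) _ _)]
  ring

/-- The level at which the section `v ↦ upperC a b c u v` is constant up to `v = a`, where
`d = min a b - c`. -/
noncomputable def upperCLevel (a b d u : ℝ) : ℝ := max (min u d) (min (u - b + d) a)

/-- The integral of a section of `upperC`. -/
theorem integral_upperC_section {a b c u : ℝ} (hu : u ∈ Icc (0:ℝ) 1) (hc0 : 0 ≤ c)
    (hca : c ≤ a) (hcb : c ≤ b) (hca' : c ≤ 1 - a) (hcb' : c ≤ 1 - b) :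
    ∫ v in (0:ℝ)..1, upperC a b c u v
      = u - u ^ 2 / 2 - (a - upperCLevel a b (min a b - c) u)
          * (u - upperCLevel a b (min a b - c) u) := by
  obtain ⟨hu0, hu1⟩ := hu
  have hcont : Continuous (upperC a b c u) := by
    unfold upperC
    fun_prop
  set s := upperCLevel a b (min a b - c) u with hs
  unfold upperCLevel at hs
  have hs0 : 0 ≤ s := by grind
  have hsa : s ≤ a := by grind
  have hsu : s ≤ u := by grind
  have hs1 : a + u - s ≤ 1 := by grind
  rw [integral_zero_one_eq_of_eqOn hcont hs0 hsa (by linarith : a ≤ a + u - s) hs1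
    (g₁ := fun v => 0 + 1 * v + 0 * v ^ 2) (g₂ := fun v => s + 0 * v + 0 * v ^ 2)
    (g₃ := fun v => (s - a) + 1 * v + 0 * v ^ 2) (g₄ := fun v => u + 0 * v + 0 * v ^ 2)]
  · simp only [integral_quadratic]
    ring
  all_goals
    rintro v ⟨hv, hv'⟩
    simp only [upperC]
    grind

theorem rho_upperC (a b c d₂ : ℝ) (ha : a ∈ Set.Icc (0:ℝ) 1) (hb : b ∈ Set.Icc (0:ℝ) 1)
    (hc0 : 0 ≤ c) (hc : c ≤ min (min a b) (min (1 - a) (1 - b)))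
    (hd : d₂ = min a b - c) :
    12 * (∫ u in (0:ℝ)..1, ∫ v in (0:ℝ)..1, upperC a b c u v) - 3
      = 1 - 6 * (a + b - 2*d₂) * (a - d₂) * (b - d₂) ∧
    spearmanRho (upperC a b c) = 1 - 6 * (a + b - 2*d₂) * (a - d₂) * (b - d₂) := by
  rw [spearmanRho, and_self]
  obtain ⟨⟨hca, hcb⟩, hca', hcb'⟩ : (c ≤ a ∧ c ≤ b) ∧ c ≤ 1 - a ∧ c ≤ 1 - b := by
    simpa only [le_min_iff] using hc
  have hsection : EqOn (fun u => ∫ v in (0:ℝ)..1, upperC a b c u v)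
      (fun u => u - u ^ 2 / 2 - (a - upperCLevel a b d₂ u) * (u - upperCLevel a b d₂ u))
      (uIcc 0 1) := by
    intro u hu
    rw [uIcc_of_le zero_le_one] at hu
    simpa only [hd] using integral_upperC_section hu hc0 hca hcb hca' hcb'
  have hcont : Continuous (fun u : ℝ =>
      u - u ^ 2 / 2 - (a - upperCLevel a b d₂ u) * (u - upperCLevel a b d₂ u)) := by
    unfold upperCLevel
    fun_prop
  have hd0 : 0 ≤ d₂ := by grind
  have hda : d₂ ≤ a := by grind
  have hdb : d₂ ≤ b := by grind
  have hd1 : a + b - d₂ ≤ 1 := by grind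
  rw [integral_congr hsection,
    integral_zero_one_eq_of_eqOn hcont hd0 hdb (by linarith : b ≤ a + b - d₂) hd1
    (g₁ := fun u => 0 + 1 * u + (-1 / 2) * u ^ 2)
    (g₂ := fun u => (a - d₂) * d₂ + (1 - (a - d₂)) * u + (-1 / 2) * u ^ 2)
    (g₃ := fun u => -((a + b - d₂) * (b - d₂)) + (1 + (b - d₂)) * u + (-1 / 2) * u ^ 2)
    (g₄ := fun u => 0 + 1 * u + (-1 / 2) * u ^ 2)]
  · simp only [integral_quadratic]
    ring
  all_goals rintro u ⟨hu, hu'⟩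
  · have : upperCLevel a b d₂ u = u := by grind [upperCLevel]
    simp only [this]
    ring
  · have : upperCLevel a b d₂ u = d₂ := by grind [upperCLevel]
    simp only [this]
    ring
  · have : upperCLevel a b d₂ u = u - b + d₂ := by grind [upperCLevel]
    simp only [this]
    ring
  · have : upperCLevel a b d₂ u = a := by grind [upperCLevel]
    simp only [this]
    ring
end

section
/- Let m ∈ [0,1/3]. For every (a,b) ∈ Δ_m, Spearman's rho of the lower bound copula satisfies ρ(C̲^{(a,b)}_m) ≥ 12m³ − 1, and equality holds at (a,b) = (m, 1−m), i.e. ρ(C̲^{(m,1−m)}_m) = 12m³ − 1. -/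
open Set MeasureTheory intervalIntegral

/-- The pyramid of height `m` over the hexagonal ball of radius `m` centred at the origin. -/
noncomputable def hexPyramid (m x y : ℝ) : ℝ :=
  max (m - max (-x) 0 - max (-y) 0 - max (x + y) 0) 0

lemma continuous_uncurry_lowerC (a b m : ℝ) :
    Continuous (Function.uncurry (lowerC a b m)) := by
  unfold lowerC Function.uncurry
  fun_prop

lemma continuous_uncurry_hexPyramid (a b m : ℝ) :
    Continuous (Function.uncurry fun u v : ℝ =>
      max (v - (1 - u)) 0 + hexPyramid m (u - a) (v - b)) := by
  unfold hexPyramid Function.uncurry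
  fun_prop

lemma add_hexPyramid_le_lowerC {a b m : ℝ} (hab : a + b ≤ 1) (u v : ℝ) :
    max (v - (1 - u)) 0 + hexPyramid m (u - a) (v - b) ≤ lowerC a b m u v := by
  unfold hexPyramid lowerC
  rw [max_eq_right (by linarith : a + b - 1 ≤ 0)]
  grind

lemma lowerC_eq_add_hexPyramid {a b m : ℝ} (hab : a + b = 1) (u v : ℝ) :
    lowerC a b m u v = max (v - (1 - u)) 0 + hexPyramid m (u - a) (v - b) := by
  unfold hexPyramid lowerC
  rw [max_eq_right (by linarith : a + b - 1 ≤ 0)]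
  grind

lemma intervalIntegrable_ramp (c : ℝ) :
    IntervalIntegrable (fun v : ℝ => max (v - c) 0) volume 0 1 :=
  (by fun_prop : Continuous fun v : ℝ => max (v - c) 0).intervalIntegrable _ _

lemma integral_ramp {c : ℝ} (h0 : 0 ≤ c) (h1 : c ≤ 1) :
    ∫ v in (0:ℝ)..1, max (v - c) 0 = (1 - c) ^ 2 / 2 := by
  have hcont : Continuous fun v : ℝ => max (v - c) 0 := by fun_prop
  rw [← integral_add_adjacent_intervals (hcont.intervalIntegrable 0 c)
    (hcont.intervalIntegrable c 1)]
  have hleft : ∫ v in (0:ℝ)..c, max (v - c) 0 = ∫ _ in (0:ℝ)..c, (0:ℝ) := by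
    refine integral_congr fun v hv => ?_
    rw [uIcc_of_le h0] at hv
    exact max_eq_right (by linarith [hv.2])
  have hright : ∫ v in c..1, max (v - c) 0 = ∫ v in c..1, (v - c) := by
    refine integral_congr fun v hv => ?_
    rw [uIcc_of_le h1] at hv
    exact max_eq_left (by linarith [hv.1])
  rw [hleft, hright, intervalIntegral.integral_sub (by simp) (by simp)]
  simp only [intervalIntegral.integral_zero, integral_id, intervalIntegral.integral_const,
    smul_eq_mul]
  ring

lemma integral_ramp_combination {p q r s : ℝ} (hp : p ∈ Icc (0:ℝ) 1) (hq : q ∈ Icc (0:ℝ) 1)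
    (hr : r ∈ Icc (0:ℝ) 1) (hs : s ∈ Icc (0:ℝ) 1) :
    ∫ v in (0:ℝ)..1, (max (v - p) 0 - max (v - q) 0 - max (v - r) 0 + max (v - s) 0)
      = ((1 - p) ^ 2 - (1 - q) ^ 2 - (1 - r) ^ 2 + (1 - s) ^ 2) / 2 := by
  have ip := intervalIntegrable_ramp p
  have iq := intervalIntegrable_ramp q
  have ir := intervalIntegrable_ramp r
  rw [intervalIntegral.integral_add ((ip.sub iq).sub ir) (intervalIntegrable_ramp s),
    intervalIntegral.integral_sub (ip.sub iq) ir, intervalIntegral.integral_sub ip iq,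
    integral_ramp hp.1 hp.2, integral_ramp hq.1 hq.2, integral_ramp hr.1 hr.2,
    integral_ramp hs.1 hs.2]
  ring

/-- The section of the pyramid at `x` has area `m * (m - |x|)⁺`, written with ramp functions. -/
lemma integral_hexPyramid_section {b m : ℝ} (hm : 0 ≤ m) (hb : m ≤ b) (hb' : b + m ≤ 1)
    (x : ℝ) :
    ∫ v in (0:ℝ)..1, hexPyramid m x (v - b)
      = m * (max (x + m) 0 - max x 0 - max x 0 + max (x - m) 0) := by
  by_cases hx : |x| ≤ m
  · obtain ⟨hx1, hx2⟩ := abs_le.mp hx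
    rw [max_eq_left (by linarith : 0 ≤ x + m), max_eq_right (by linarith : x - m ≤ 0)]
    rcases le_total 0 x with h | h
    · have hsec : ∀ v : ℝ, hexPyramid m x (v - b) = max (v - (b - m)) 0 - max (v - (b - x)) 0
          - max (v - b) 0 + max (v - (b + m - x)) 0 := by
        intro v
        unfold hexPyramid
        grind
      simp only [hsec]
      rw [integral_ramp_combination ⟨by linarith, by linarith⟩ ⟨by linarith, by linarith⟩
        ⟨by linarith, by linarith⟩ ⟨by linarith, by linarith⟩, max_eq_left h]
      ring
    · have hsec : ∀ v : ℝ, hexPyramid m x (v - b) = max (v - (b - m - x)) 0 - max (v - b) 0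
          - max (v - (b - x)) 0 + max (v - (b + m)) 0 := by
        intro v
        unfold hexPyramid
        grind
      simp only [hsec]
      rw [integral_ramp_combination ⟨by linarith, by linarith⟩ ⟨by linarith, by linarith⟩
        ⟨by linarith, by linarith⟩ ⟨by linarith, by linarith⟩, max_eq_right h]
      ring
  · have hsec : ∀ v : ℝ, hexPyramid m x (v - b) = 0 := by
      intro v
      unfold hexPyramid
      grind
    simp only [hsec, intervalIntegral.integral_zero]
    have : max (x + m) 0 - max x 0 - max x 0 + max (x - m) 0 = 0 := by grind
    rw [this, mul_zero]

lemma integral_add_hexPyramid {a b m : ℝ} (hm : 0 ≤ m) (ha : m ≤ a) (ha' : a + m ≤ 1)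
    (hb : m ≤ b) (hb' : b + m ≤ 1) :
    ∫ u in (0:ℝ)..1, ∫ v in (0:ℝ)..1, (max (v - (1 - u)) 0 + hexPyramid m (u - a) (v - b))
      = 1 / 6 + m ^ 3 := by
  have hinner : ∀ u ∈ uIcc (0:ℝ) 1,
      ∫ v in (0:ℝ)..1, (max (v - (1 - u)) 0 + hexPyramid m (u - a) (v - b))
        = u ^ 2 / 2 + m * (max (u - (a - m)) 0 - max (u - a) 0 - max (u - a) 0
          + max (u - (a + m)) 0) := by
    intro u hu
    rw [uIcc_of_le zero_le_one] at hu
    have hcont : Continuous fun v : ℝ => hexPyramid m (u - a) (v - b) := by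
      unfold hexPyramid
      fun_prop
    rw [intervalIntegral.integral_add (intervalIntegrable_ramp _) (hcont.intervalIntegrable _ _),
      integral_ramp (by linarith [hu.2]) (by linarith [hu.1]),
      integral_hexPyramid_section hm hb hb']
    ring_nf
  rw [integral_congr hinner, intervalIntegral.integral_add
      (Continuous.intervalIntegrable (by fun_prop) _ _)
      (Continuous.intervalIntegrable (by fun_prop) _ _),
    intervalIntegral.integral_const_mul, intervalIntegral.integral_div, integral_pow,
    integral_ramp_combination ⟨by linarith, by linarith⟩ ⟨by linarith, by linarith⟩
      ⟨by linarith, by linarith⟩ ⟨by linarith, by linarith⟩]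
  norm_num
  ring

theorem rho_lowerC_min (m : ℝ) (hm : m ∈ Set.Icc (0:ℝ) (1/3)) :
    (∀ a b : ℝ, a ∈ Set.Icc (0:ℝ) 1 → b ∈ Set.Icc (0:ℝ) 1 →
      m ≤ a → m ≤ b - a → a + b ≤ 1 →
      12 * m^3 - 1 ≤ spearmanRho (lowerC a b m)) ∧
    spearmanRho (lowerC m (1 - m) m) = 12 * m^3 - 1 := by
  obtain ⟨hm0, hm1⟩ := hm
  refine ⟨fun a b ha hb hma hmb hab => ?_, ?_⟩
  · have hint := integral_add_hexPyramid (a := a) (b := b) hm0 hma (by linarith [hb.2])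
      (by linarith) (by linarith)
    have hP := continuous_uncurry_hexPyramid a b m
    have hC := continuous_uncurry_lowerC a b m
    have hle : ∫ u in (0:ℝ)..1, ∫ v in (0:ℝ)..1,
          (max (v - (1 - u)) 0 + hexPyramid m (u - a) (v - b))
        ≤ ∫ u in (0:ℝ)..1, ∫ v in (0:ℝ)..1, lowerC a b m u v := by
      refine integral_mono_on zero_le_one
        ((continuous_parametric_intervalIntegral_of_continuous' hP 0 1).intervalIntegrable _ _)
        ((continuous_parametric_intervalIntegral_of_continuous' hC 0 1).intervalIntegrable _ _)
        fun u _ => ?_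
      exact integral_mono_on zero_le_one
        ((hP.comp (Continuous.prodMk_right u)).intervalIntegrable _ _)
        ((hC.comp (Continuous.prodMk_right u)).intervalIntegrable _ _)
        fun v _ => add_hexPyramid_le_lowerC hab u v
    unfold spearmanRho
    linarith
  · have hint := integral_add_hexPyramid (a := m) (b := 1 - m) hm0 le_rfl (by linarith)
      (by linarith) (by linarith)
    unfold spearmanRho
    simp only [lowerC_eq_add_hexPyramid (add_sub_cancel m 1)]
    rw [hint]
    ring
end

section
/- Let C be a copula with attained asymmetry m. Then 12m³ − 1 ≤ ρ(C) ≤ 1 − 36m³, where ρ(C) is Spearman's rho of C. In particular, if m = 1/3 then ρ(C) ∈ [−5/9, −1/3]. -/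
open Set MeasureTheory intervalIntegral

namespace IsCopula

variable {C : ℝ → ℝ → ℝ}

lemma mono_right (hC : IsCopula C) {u v w : ℝ} (hu : u ∈ Icc (0:ℝ) 1) (hv : 0 ≤ v)
    (hvw : v ≤ w) (hw : w ≤ 1) : C u v ≤ C u w := by
  have h := hC.2 0 u v w le_rfl hu.1 hu.2 hv hvw hw
  linarith [(hC.1 v ⟨hv, hvw.trans hw⟩).2.1, (hC.1 w ⟨hv.trans hvw, hw⟩).2.1]

lemma mono_left (hC : IsCopula C) {u v w : ℝ} (hu : u ∈ Icc (0:ℝ) 1) (hv : 0 ≤ v)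
    (hvw : v ≤ w) (hw : w ≤ 1) : C v u ≤ C w u := by
  have h := hC.2 v w 0 u hv hvw hw le_rfl hu.1 hu.2
  linarith [(hC.1 v ⟨hv, hvw.trans hw⟩).1, (hC.1 w ⟨hv.trans hvw, hw⟩).1]

lemma le_add_right (hC : IsCopula C) {u v w : ℝ} (hu : u ∈ Icc (0:ℝ) 1) (hv : 0 ≤ v)
    (hvw : v ≤ w) (hw : w ≤ 1) : C u w ≤ C u v + (w - v) := by
  have h := hC.2 u 1 v w hu.1 hu.2 le_rfl hv hvw hw
  linarith [(hC.1 v ⟨hv, hvw.trans hw⟩).2.2.2, (hC.1 w ⟨hv.trans hvw, hw⟩).2.2.2]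

lemma le_add_left (hC : IsCopula C) {u v w : ℝ} (hu : u ∈ Icc (0:ℝ) 1) (hv : 0 ≤ v)
    (hvw : v ≤ w) (hw : w ≤ 1) : C w u ≤ C v u + (w - v) := by
  have h := hC.2 v w u 1 hv hvw hw hu.1 hu.2 le_rfl
  linarith [(hC.1 v ⟨hv, hvw.trans hw⟩).2.2.1, (hC.1 w ⟨hv.trans hvw, hw⟩).2.2.1]

lemma nonneg (hC : IsCopula C) {u v : ℝ} (hu : u ∈ Icc (0:ℝ) 1) (hv : v ∈ Icc (0:ℝ) 1) :
    0 ≤ C u v := by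
  linarith [hC.mono_right hu le_rfl hv.1 hv.2, (hC.1 u hu).1]

lemma le_left (hC : IsCopula C) {u v : ℝ} (hu : u ∈ Icc (0:ℝ) 1) (hv : v ∈ Icc (0:ℝ) 1) :
    C u v ≤ u := by
  linarith [hC.mono_right hu hv.1 hv.2 le_rfl, (hC.1 u hu).2.2.1]

lemma le_right (hC : IsCopula C) {u v : ℝ} (hu : u ∈ Icc (0:ℝ) 1) (hv : v ∈ Icc (0:ℝ) 1) :
    C u v ≤ v := by
  linarith [hC.mono_left hv hu.1 hu.2 le_rfl, (hC.1 v hv).2.2.2]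

lemma add_sub_one_le (hC : IsCopula C) {u v : ℝ} (hu : u ∈ Icc (0:ℝ) 1)
    (hv : v ∈ Icc (0:ℝ) 1) : u + v - 1 ≤ C u v := by
  linarith [hC.le_add_right hu hv.1 hv.2 le_rfl, (hC.1 u hu).2.2.1]

/-- The reflection of a copula in its second variable is a copula. -/
lemma reflect (hC : IsCopula C) : IsCopula (fun u v => u - C u (1 - v)) := by
  refine ⟨fun u hu => ?_, fun u₁ u₂ v₁ v₂ h₁ h₂ h₃ h₄ h₅ h₆ => ?_⟩
  · have hu' : 1 - u ∈ Icc (0:ℝ) 1 := ⟨by linarith [hu.2], by linarith [hu.1]⟩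
    have h := hC.1 u hu
    have h' := hC.1 (1 - u) hu'
    simp only [sub_zero, sub_self]
    refine ⟨?_, ?_, ?_, ?_⟩ <;> linarith [h.1, h.2.2.1, h'.2.1, h'.2.2.2]
  · have h := hC.2 u₁ u₂ (1 - v₂) (1 - v₁) h₁ h₂ h₃ (by linarith) (by linarith) (by linarith)
    linarith

lemma intervalIntegrable_right (hC : IsCopula C) {u : ℝ} (hu : u ∈ Icc (0:ℝ) 1) :
    IntervalIntegrable (C u) volume 0 1 := by
  apply MonotoneOn.intervalIntegrable
  rw [uIcc_of_le zero_le_one]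
  exact fun v hv w hw hvw => hC.mono_right hu hv.1 hvw hw.2

lemma intervalIntegrable_integral (hC : IsCopula C) :
    IntervalIntegrable (fun u => ∫ v in (0:ℝ)..1, C u v) volume 0 1 := by
  apply MonotoneOn.intervalIntegrable
  rw [uIcc_of_le zero_le_one]
  exact fun u hu w hw huw => integral_mono_on zero_le_one (hC.intervalIntegrable_right hu)
    (hC.intervalIntegrable_right hw) fun v hv => hC.mono_left hv hu.1 huw hw.2

end IsCopula

lemma integral_le_of_le_quadratic {f : ℝ → ℝ} (hf : IntervalIntegrable f volume 0 1)
    {α β : ℝ} (hα : 0 ≤ α) (hαβ : α ≤ β) (hβ : β ≤ 1) (p q r : ℝ)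
    (h : ∀ x ∈ Icc α β, f x ≤ p + q * x + r * x ^ 2) :
    IntervalIntegrable f volume α β ∧
    ∫ x in α..β, f x ≤
      p * (β - α) + q * ((β ^ 2 - α ^ 2) / 2) + r * ((β ^ 3 - α ^ 3) / 3) := by
  have hf' : IntervalIntegrable f volume α β := by
    apply hf.mono_set
    rw [uIcc_of_le hαβ, uIcc_of_le zero_le_one]
    exact Icc_subset_Icc hα hβ
  refine ⟨hf', (integral_mono_on hαβ hf'
    (Continuous.intervalIntegrable (by fun_prop) _ _) h).trans_eq ?_⟩
  rw [intervalIntegral.integral_add, intervalIntegral.integral_add,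
    intervalIntegral.integral_const, intervalIntegral.integral_const_mul,
    intervalIntegral.integral_const_mul, integral_id, integral_pow]
  · norm_num
    ring
  all_goals exact Continuous.intervalIntegrable (by fun_prop) _ _

/-- Integral bound for a section `f = C u` of a copula that satisfies `f a ≤ k`. -/
lemma integral_section_le {f : ℝ → ℝ} (hf : IntervalIntegrable f volume 0 1) {u a k : ℝ}
    (hk : 0 ≤ k) (hka : k ≤ a) (hku : k ≤ u) (hle : u - k + a ≤ 1)
    (hfu : ∀ v ∈ Icc (0:ℝ) 1, f v ≤ u) (hfv : ∀ v ∈ Icc (0:ℝ) 1, f v ≤ v)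
    (hfk : ∀ v ∈ Icc (0:ℝ) a, f v ≤ k) (hfa : ∀ v ∈ Icc a 1, f v ≤ k + (v - a)) :
    ∫ v in (0:ℝ)..1, f v ≤ u - u ^ 2 / 2 - (u - k) * (a - k) := by
  obtain ⟨i₁, h₁⟩ := integral_le_of_le_quadratic hf le_rfl hk (by linarith) 0 1 0
    fun x hx => by linarith [hfv x ⟨hx.1, by linarith [hx.2]⟩]
  obtain ⟨i₂, h₂⟩ := integral_le_of_le_quadratic hf hk hka (by linarith) k 0 0
    fun x hx => by linarith [hfk x ⟨by linarith [hx.1], hx.2⟩]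
  obtain ⟨i₃, h₃⟩ := integral_le_of_le_quadratic hf (hk.trans hka)
    (show a ≤ u - k + a by linarith) hle (k - a) 1 0
    fun x hx => by linarith [hfa x ⟨hx.1, by linarith [hx.2]⟩]
  obtain ⟨i₄, h₄⟩ := integral_le_of_le_quadratic hf (by linarith) hle le_rfl u 0 0
    fun x hx => by linarith [hfu x ⟨by linarith [hx.1], hx.2⟩]
  rw [← integral_add_adjacent_intervals i₁ (i₂.trans (i₃.trans i₄)),
    ← integral_add_adjacent_intervals i₂ (i₃.trans i₄),
    ← integral_add_adjacent_intervals i₃ i₄]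
  linarith

namespace IsCopula

variable {C : ℝ → ℝ → ℝ}

/-- Upper bound for the integral of a copula with a prescribed value at `(x, y)`. -/
lemma integral_le_of_value (hC : IsCopula C) {x y : ℝ} (hx : x ∈ Icc (0:ℝ) 1)
    (hy : y ∈ Icc (0:ℝ) 1) :
    ∫ u in (0:ℝ)..1, ∫ v in (0:ℝ)..1, C u v ≤
      1 / 3 - (x - C x y) * (y - C x y) * ((x - C x y) + (y - C x y)) / 2 := by
  have hc := hC.nonneg hx hy
  have hcx := hC.le_left hx hy
  have hcy := hC.le_right hx hy
  have hW := hC.add_sub_one_le hx hy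
  set c := C x y
  have slice : ∀ u ∈ Icc (0:ℝ) 1, ∀ k, C u y ≤ k → 0 ≤ k → k ≤ y → k ≤ u → u - k + y ≤ 1 →
      ∫ v in (0:ℝ)..1, C u v ≤ u - u ^ 2 / 2 - (u - k) * (y - k) :=
    fun u hu k hCk h0 hky hku h1 =>
      integral_section_le (hC.intervalIntegrable_right hu) h0 hky hku h1
        (fun v hv => hC.le_left hu hv) (fun v hv => hC.le_right hu hv)
        (fun v hv => (hC.mono_right hu hv.1 hv.2 hy.2).trans hCk)
        (fun v hv => by linarith [hC.le_add_right hu hy.1 hv.1 hv.2])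
  have trivial_slice : ∀ u ∈ Icc (0:ℝ) 1, ∫ v in (0:ℝ)..1, C u v ≤ u - u ^ 2 / 2 := by
    intro u hu
    have h := integral_section_le (hC.intervalIntegrable_right hu) le_rfl le_rfl hu.1
      (by linarith [hu.2]) (fun v hv => hC.le_left hu hv) (fun v hv => hC.le_right hu hv)
      (fun v hv => by linarith [hC.le_right hu ⟨hv.1, hv.2.trans zero_le_one⟩, hv.2])
      (fun v hv => by linarith [hC.le_right hu hv])
    linarith
  have hI := hC.intervalIntegrable_integral
  obtain ⟨i₁, h₁⟩ := integral_le_of_le_quadratic hI le_rfl hc (by linarith [hx.2])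
    0 1 (-1 / 2) fun u hu => by
      linarith [trivial_slice u ⟨hu.1, by linarith [hu.2, hx.2]⟩]
  obtain ⟨i₂, h₂⟩ := integral_le_of_le_quadratic hI hc hcx hx.2
    (c * (y - c)) (1 - (y - c)) (-1 / 2) fun u hu => by
      have hu0 : 0 ≤ u := hc.trans hu.1
      linarith [slice u ⟨hu0, hu.2.trans hx.2⟩ c
        (hC.mono_left hy hu0 hu.2 hx.2) hc hcy hu.1 (by linarith [hu.2])]
  obtain ⟨i₃, h₃⟩ := integral_le_of_le_quadratic hI hx.1
    (show x ≤ x + (y - c) by linarith) (by linarith)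
    (-(x - c) * (y - c + x)) (1 + (x - c)) (-1 / 2) fun u hu => by
      have hu1 : u ≤ 1 := by linarith [hu.2]
      linarith [slice u ⟨hx.1.trans hu.1, hu1⟩ (c + (u - x))
        (hC.le_add_left hy hx.1 hu.1 hu1) (by linarith [hu.1]) (by linarith [hu.2])
        (by linarith) (by linarith)]
  obtain ⟨i₄, h₄⟩ := integral_le_of_le_quadratic hI (show 0 ≤ x + (y - c) by linarith [hx.1])
    (by linarith) le_rfl 0 1 (-1 / 2) fun u hu => by
      linarith [trivial_slice u ⟨by linarith [hu.1, hx.1], hu.2⟩]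
  rw [← integral_add_adjacent_intervals i₁ (i₂.trans (i₃.trans i₄)),
    ← integral_add_adjacent_intervals i₂ (i₃.trans i₄),
    ← integral_add_adjacent_intervals i₃ i₄]
  linarith

/-- Lower bound for the integral of a copula with a prescribed value at `(x, y)`. -/
lemma le_integral_of_value (hC : IsCopula C) {x y : ℝ} (hx : x ∈ Icc (0:ℝ) 1)
    (hy : y ∈ Icc (0:ℝ) 1) :
    1 / 6 + C x y * (C x y - (x + y - 1)) * (C x y + (C x y - (x + y - 1))) / 2 ≤
      ∫ u in (0:ℝ)..1, ∫ v in (0:ℝ)..1, C u v := by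
  have h := hC.reflect.integral_le_of_value hx (y := 1 - y)
    ⟨by linarith [hy.2], by linarith [hy.1]⟩
  have hinner : ∀ u ∈ uIcc (0:ℝ) 1, ∫ v in (0:ℝ)..1, (u - C u (1 - v)) =
      u - ∫ v in (0:ℝ)..1, C u v := by
    intro u hu
    rw [uIcc_of_le zero_le_one] at hu
    have hi : IntervalIntegrable (fun v => C u (1 - v)) volume 0 1 := by
      simpa using ((hC.intervalIntegrable_right hu).comp_sub_left 1).symm
    rw [intervalIntegral.integral_sub intervalIntegrable_const hi,
      intervalIntegral.integral_comp_sub_left (C u) 1]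
    simp
  rw [integral_congr hinner, intervalIntegral.integral_sub
    (Continuous.intervalIntegrable (by fun_prop) _ _) hC.intervalIntegrable_integral,
    integral_id] at h
  simp only [sub_sub_cancel] at h
  linarith

lemma sub_swap_le_abs_sub (hC : IsCopula C) {a b : ℝ} (ha : a ∈ Icc (0:ℝ) 1)
    (hb : b ∈ Icc (0:ℝ) 1) : C a b - C b a ≤ |a - b| := by
  rcases le_total a b with h | h
  · rw [abs_of_nonpos (by linarith)]
    linarith [hC.le_add_right ha ha.1 h hb.2, hC.mono_left ha ha.1 h hb.2]
  · rw [abs_of_nonneg (by linarith)]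
    linarith [hC.le_add_left hb hb.1 h ha.2, hC.mono_right hb hb.1 h ha.2]

/-- Bounds on Spearman's rho from the asymmetry of a copula at a single point. -/
lemma spearmanRho_bounds (hC : IsCopula C) {a b m : ℝ} (ha : a ∈ Icc (0:ℝ) 1)
    (hb : b ∈ Icc (0:ℝ) 1) (hm : 0 ≤ m) (hab : C a b - C b a = m) :
    12 * m ^ 3 - 1 ≤ spearmanRho C ∧ spearmanRho C ≤ 1 - 36 * m ^ 3 := by
  have hdist := hC.sub_swap_le_abs_sub ha hb
  have key : ∀ {p q P Q : ℝ}, 0 ≤ p → 0 ≤ q → p ≤ P → q ≤ Q →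
      p * q * (p + q) ≤ P * Q * (P + Q) := fun hp hq hP hQ => by
    have := hp.trans hP
    have := hq.trans hQ
    gcongr
  unfold spearmanRho
  constructor
  · have h := hC.le_integral_of_value ha hb
    have := key hm hm (show m ≤ C a b by linarith [hC.nonneg hb ha])
      (show m ≤ C a b - (a + b - 1) by linarith [hC.add_sub_one_le hb ha])
    linarith
  · have h := hC.integral_le_of_value hb ha
    have h1 := hC.le_left ha hb
    have h2 := hC.le_right ha hb
    rcases le_total a b with hle | hle
    · rw [abs_of_nonpos (by linarith)] at hdist
      have := key (show 0 ≤ 2 * m by linarith) hm (show 2 * m ≤ b - C b a by linarith)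
        (show m ≤ a - C b a by linarith)
      linarith
    · rw [abs_of_nonneg (by linarith)] at hdist
      have := key hm (show 0 ≤ 2 * m by linarith) (show m ≤ b - C b a by linarith)
        (show 2 * m ≤ a - C b a by linarith)
      linarith

end IsCopula

theorem rho_vs_asymmetry (C : ℝ → ℝ → ℝ) (m : ℝ) (hC : IsCopula C)
    (hbound : ∀ u ∈ Set.Icc (0:ℝ) 1, ∀ v ∈ Set.Icc (0:ℝ) 1, |C u v - C v u| ≤ m)
    (hattain : ∃ a ∈ Set.Icc (0:ℝ) 1, ∃ b ∈ Set.Icc (0:ℝ) 1, |C a b - C b a| = m) :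
    (12 * m^3 - 1 ≤ spearmanRho C ∧ spearmanRho C ≤ 1 - 36 * m^3) ∧
    (m = 1/3 → spearmanRho C ∈ Set.Icc (-(5:ℝ)/9) (-(1:ℝ)/3)) := by
  have main : 12 * m^3 - 1 ≤ spearmanRho C ∧ spearmanRho C ≤ 1 - 36 * m^3 := by
    obtain ⟨a, ha, b, hb, hab⟩ := hattain
    have hm : 0 ≤ m := hab ▸ abs_nonneg _
    rcases eq_or_eq_neg_of_abs_eq hab with h | h
    · exact hC.spearmanRho_bounds ha hb hm h
    · exact hC.spearmanRho_bounds hb ha hm (by linarith)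
  refine ⟨main, fun hm => ?_⟩
  subst hm
  norm_num at main
  constructor <;> linarith [main.1, main.2]
end
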